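/- Let M ≥ 2 be an integer, f : ℤ → ℝ a function with f(n+M) = f(n) for all n ∈ ℤ, ν ∈ {0,1}, and a ≥ 0, b ≥ 1 integers. Assume G_f^{(ν)}(k) ≠ 0 for some integer k ≥ 1 and let k_ν be the least such k. Define the sequence ξ(n) as in the context. Then ξ(n) / [ (−1)^ν · (M/(2π k_ν))^(2n+ν+1) · G_f^{(ν)}(k_ν) · 2^(2n+ν) · n! · n^(ν−1/2) · e^(b k_ν² π²/(2M²)) / (b^n · √(πM)) ] → 1 as n → ∞. -/

import Mathlib

/-- The Fourier coefficient `G_f^{(ν)}(k)` of a function `f : ℤ → ℝ` of period `M`. -/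
noncomputable def Gf (M : ℕ) (f : ℤ → ℝ) (ν : ℕ) (k : ℕ) : ℝ :=
  if ν = 0 then
    (2 / Real.sqrt M) * ∑ m ∈ Finset.range M, f m * Real.sin (2 * Real.pi * m * k / M)
  else
    (2 / Real.sqrt M) * ∑ m ∈ Finset.range M, f m * Real.cos (2 * Real.pi * m * k / M)

/-- `C_n = (−1)^(n+1) (M^(2n+ν)/(2n+ν+1)) ∑_{m=1}^M f(m) B_{2n+ν+1}(m/M)`. -/
noncomputable def Cf (M : ℕ) (f : ℤ → ℝ) (ν : ℕ) (n : ℕ) : ℝ :=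
  (-1) ^ (n + 1) * ((M : ℝ) ^ (2 * n + ν) / (2 * n + ν + 1)) *
    ∑ m ∈ Finset.Icc 1 M,
      f m * (((Polynomial.bernoulli (2 * n + ν + 1)).eval ((m : ℚ) / (M : ℚ)) : ℚ) : ℝ)

/-- `D_n = b^(−n) ∑_{k=0}^n C(n,k) a^(n−k) C_k`. -/
noncomputable def Df (M : ℕ) (f : ℤ → ℝ) (ν a b : ℕ) (n : ℕ) : ℝ :=
  ((b : ℝ) ^ n)⁻¹ *
    ∑ k ∈ Finset.range (n + 1), (n.choose k : ℝ) * (a : ℝ) ^ (n - k) * Cf M f ν k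

/-- The unsigned Stirling number of the first kind `s(n,j)`: the coefficient of `X^j`
in `X (X+1) (X+2) ⋯ (X+n−1)`. -/
noncomputable def stirling1 (n j : ℕ) : ℝ :=
  (∏ i ∈ Finset.range n, (Polynomial.X + Polynomial.C (i : ℝ))).coeff j

/-- `ξ(0) = D_0` and `ξ(n) = (1/n!) ∑_{m=0}^{n−1} s(n, n−m) D_{n−m}` for `n ≥ 1`. -/
noncomputable def xif (M : ℕ) (f : ℤ → ℝ) (ν a b : ℕ) : ℕ → ℝ
  | 0 => Df M f ν a b 0
  | n + 1 => (1 / ((n + 1).factorial : ℝ)) *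
      ∑ m ∈ Finset.range (n + 1), stirling1 (n + 1) (n + 1 - m) * Df M f ν a b (n + 1 - m)

/-!
The Fourier expansion of the Bernoulli polynomials turns `C_n` into an elementary factor times the
Dirichlet series `∑ G_f(k) / k^(2n+ν+1)`, which is dominated by its first nonzero term `k = k_ν`.
Hence `C_n ~ A (2n+ν)! Rⁿ` with `R = (M/(2πk_ν))²`. Both `bⁿ D_n` and `n! bⁿ ξ(n)` are weighted sums
of earlier terms, and replacing `n` by `n - m` divides `(2n+ν)! Rⁿ` by about `(4Rn²)^m`. The
binomial weights `C(n,m) = O(n^m)` therefore contribute only through `m = 0`, whereas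
`s(n,n-m) ~ n^(2m)/(2^m m!)` yields in the limit, by dominated convergence, the factor
`∑ (b/(8R))^m/m! = e^(b/(8R))`. Stirling's formula puts `(2n+ν)!` in the stated form.
-/

open Filter Finset Topology
open scoped Nat Real

section DescFactorial

lemma tendsto_descFactorial_div_pow {c : ℕ} (hc : c ≠ 0) (ν j : ℕ) :
    Tendsto (fun n : ℕ => ((c * n + ν).descFactorial j : ℝ) / (n : ℝ) ^ j) atTop
      (𝓝 ((c : ℝ) ^ j)) := by
  have hatTop : Tendsto (fun n : ℕ => c * n + ν) atTop atTop :=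
    tendsto_atTop_mono (fun n => (Nat.le_mul_of_pos_left n (Nat.pos_of_ne_zero hc)).trans
      (Nat.le_add_right _ ν)) tendsto_id
  have hpow : Tendsto (fun n : ℕ => (((c * n + ν : ℕ) : ℝ) / n) ^ j) atTop (𝓝 ((c : ℝ) ^ j)) := by
    have hlin : Tendsto (fun n : ℕ => (c : ℝ) + ν / n) atTop (𝓝 (c + 0)) :=
      (tendsto_const_div_atTop_nhds_zero_nat (ν : ℝ)).const_add _
    rw [add_zero] at hlin
    refine (hlin.pow j).congr' ?_
    filter_upwards [eventually_ne_atTop 0] with n hn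
    push_cast
    field_simp
  have hequiv := ((isEquivalent_descFactorial j).comp_tendsto hatTop).div
    (Asymptotics.IsEquivalent.refl (u := fun n : ℕ => (n : ℝ) ^ j))
  refine hequiv.symm.tendsto_nhds (hpow.congr fun n => ?_)
  simp only [Function.comp_apply, Pi.div_apply, div_pow]

lemma descFactorial_two_mul_add_pos {n m : ℕ} (ν : ℕ) (h : m ≤ n) :
    0 < (2 * n + ν).descFactorial (2 * m) :=
  Nat.descFactorial_pos.2 (by lia)

lemma factorial_mul_choose_le_descFactorial {n m : ℕ} (ν : ℕ) (h : m ≤ n) :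
    m ! * n.choose m ≤ (2 * n + ν).descFactorial (2 * m) := by
  have hrest : 0 < (2 * n + ν - m).descFactorial (2 * m - m) :=
    Nat.descFactorial_pos.2 (by lia)
  calc m ! * n.choose m = n.descFactorial m := (Nat.descFactorial_eq_factorial_mul_choose n m).symm
    _ ≤ (2 * n + ν).descFactorial m := Nat.descFactorial_le m (by lia)
    _ ≤ (2 * n + ν - m).descFactorial (2 * m - m) * (2 * n + ν).descFactorial m :=
      Nat.le_mul_of_pos_left _ hrest
    _ = (2 * n + ν).descFactorial (2 * m) := Nat.descFactorial_mul_descFactorial (by lia)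

lemma tendsto_choose_div_pow_two_mul (m : ℕ) :
    Tendsto (fun n : ℕ => (n.choose m : ℝ) / (n : ℝ) ^ (2 * m)) atTop
      (𝓝 (if m = 0 then 1 else 0)) := by
  rcases eq_or_ne m 0 with rfl | hm
  · simp
  have hpow : Tendsto (fun n : ℕ => ((n : ℝ) ^ m)⁻¹) atTop (𝓝 0) :=
    tendsto_inv_atTop_zero.comp ((tendsto_pow_atTop hm).comp tendsto_natCast_atTop_atTop)
  rw [if_neg hm]
  refine squeeze_zero (fun n => by positivity) (fun n => ?_) hpow
  have hchoose : (n.choose m : ℝ) ≤ (n : ℝ) ^ m := by exact_mod_cast n.choose_le_pow m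
  calc (n.choose m : ℝ) / (n : ℝ) ^ (2 * m) ≤ (n : ℝ) ^ m / (n : ℝ) ^ (2 * m) := by gcongr
    _ = ((n : ℝ) ^ m)⁻¹ := by rw [two_mul, pow_add, div_self_mul_self']

end DescFactorial

section StirlingNumbers

lemma stirling1_eq_stirlingFirst (n j : ℕ) : stirling1 n j = Nat.stirlingFirst n j := by
  induction n generalizing j with
  | zero => cases j <;> simp [stirling1, Polynomial.coeff_one]
  | succ n ih =>
    have hrec : stirling1 (n + 1) j =
        ((∏ i ∈ range n, (Polynomial.X + Polynomial.C (i : ℝ))) * Polynomial.X).coeff j +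
          stirling1 n j * n := by
      rw [stirling1, prod_range_succ, mul_add, Polynomial.coeff_add, Polynomial.coeff_mul_C,
        ← stirling1]
    cases j with
    | zero =>
      have hzero : stirling1 n 0 * n = 0 := by
        cases n <;> simp [ih]
      rw [hrec, hzero, Polynomial.coeff_mul_X_zero]
      simp
    | succ j =>
      rw [hrec, Polynomial.coeff_mul_X, ← stirling1, ih, ih, Nat.stirlingFirst_succ_succ]
      push_cast
      ring

lemma stirlingFirst_add_succ_succ (j m : ℕ) :
    (j + 1 + (m + 1)).stirlingFirst (j + 1) =
      (j + 1 + m) * (j + 1 + m).stirlingFirst (j + 1) + (j + (m + 1)).stirlingFirst j := by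
  rw [show j + (m + 1) = j + 1 + m by ring]
  exact Nat.stirlingFirst_succ_succ (j + 1 + m) j

lemma factorial_mul_stirlingFirst_mul_factorial_le (j m : ℕ) :
    m ! * (j + m).stirlingFirst j * (2 * j)! ≤ (2 * (j + m))! := by
  induction j generalizing m with
  | zero => cases m <;> simp
  | succ j ihj =>
    induction m with
    | zero => simp [Nat.stirlingFirst_self]
    | succ m ihm =>
      have hj := ihj (m + 1)
      have hfac : (2 * (j + 1 + (m + 1)))! =
          (2 * j + 2 * m + 4) * ((2 * j + 2 * m + 3) * (2 * (j + 1 + m))!) := by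
        rw [show 2 * (j + 1 + (m + 1)) = 2 * (j + 1 + m) + 1 + 1 by ring, Nat.factorial_succ,
          Nat.factorial_succ]
        ring
      rw [show j + (m + 1) = j + 1 + m by ring] at hj
      calc (m + 1)! * (j + 1 + (m + 1)).stirlingFirst (j + 1) * (2 * (j + 1))!
          = (m + 1) * (j + 1 + m) *
              (m ! * (j + 1 + m).stirlingFirst (j + 1) * (2 * (j + 1))!) +
            (2 * j + 2) * (2 * j + 1) *
              ((m + 1)! * (j + 1 + m).stirlingFirst j * (2 * j)!) := by
            rw [stirlingFirst_add_succ_succ, show 2 * (j + 1) = 2 * j + 1 + 1 by ring,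
              show j + (m + 1) = j + 1 + m by ring, Nat.factorial_succ (2 * j + 1),
              Nat.factorial_succ (2 * j), Nat.factorial_succ m]
            ring
        _ ≤ (m + 1) * (j + 1 + m) * (2 * (j + 1 + m))! +
            (2 * j + 2) * (2 * j + 1) * (2 * (j + 1 + m))! := by gcongr
        _ ≤ (2 * (j + 1 + (m + 1)))! := by
            rw [hfac, ← add_mul, ← mul_assoc]
            gcongr
            nlinarith

lemma factorial_mul_stirlingFirst_sub_le_descFactorial {n m : ℕ} (ν : ℕ) (h : m ≤ n) :
    m ! * n.stirlingFirst (n - m) ≤ (2 * n + ν).descFactorial (2 * m) := by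
  refine le_trans ?_ (Nat.descFactorial_le (2 * m) (Nat.le_add_right (2 * n) ν))
  refine Nat.le_of_mul_le_mul_right ?_ (Nat.factorial_pos (2 * (n - m)))
  have hdesc := Nat.factorial_mul_descFactorial (n := 2 * n) (k := 2 * m) (by lia)
  have hle := factorial_mul_stirlingFirst_mul_factorial_le (n - m) m
  rw [Nat.sub_add_cancel h] at hle
  rwa [mul_comm (Nat.descFactorial _ _), Nat.mul_sub, hdesc, ← Nat.mul_sub]

lemma two_pow_mul_factorial_mul_stirlingFirst_succ (j m : ℕ) :
    2 ^ (m + 1) * (m + 1)! * (j + 1 + (m + 1)).stirlingFirst (j + 1) =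
      2 * (m + 1) * (j + 1 + m) * (2 ^ m * m ! * (j + 1 + m).stirlingFirst (j + 1)) +
        2 ^ (m + 1) * (m + 1)! * (j + (m + 1)).stirlingFirst j := by
  rw [stirlingFirst_add_succ_succ, Nat.factorial_succ m]
  ring

lemma two_pow_mul_factorial_mul_stirlingFirst_le_pow (j m : ℕ) :
    2 ^ m * m ! * (j + m).stirlingFirst j ≤ (j + m) ^ (2 * m) := by
  induction j generalizing m with
  | zero => cases m <;> simp
  | succ j ihj =>
    induction m with
    | zero => simp [Nat.stirlingFirst_self]
    | succ m ihm =>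
      calc 2 ^ (m + 1) * (m + 1)! * (j + 1 + (m + 1)).stirlingFirst (j + 1)
          = 2 * (m + 1) * (j + 1 + m) * (2 ^ m * m ! * (j + 1 + m).stirlingFirst (j + 1)) +
            2 ^ (m + 1) * (m + 1)! * (j + (m + 1)).stirlingFirst j :=
            two_pow_mul_factorial_mul_stirlingFirst_succ j m
        _ ≤ 2 * (m + 1) * (j + 1 + m) * (j + 1 + m) ^ (2 * m) +
            (j + (m + 1)) ^ (2 * (m + 1)) := by gcongr; exact ihj (m + 1)
        _ = (j + 1 + m) ^ (2 * m + 2) + (2 * m + 2 : ℕ) * (j + 1 + m) ^ (2 * m + 2 - 1) * 1 := by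
            rw [show 2 * m + 2 - 1 = 2 * m + 1 by lia]
            ring
        _ ≤ (j + 1 + m + 1) ^ (2 * m + 2) :=
            pow_add_mul_le_add_pow (Nat.zero_le _) (Nat.zero_le _) _

lemma succ_descFactorial_succ_le (n k : ℕ) :
    (n + 1).descFactorial (k + 1) ≤ (k + 1) * n.descFactorial k + n.descFactorial (k + 1) := by
  rw [Nat.succ_descFactorial_succ, Nat.descFactorial_succ, ← add_mul]
  exact Nat.mul_le_mul_right _ (by lia)

lemma descFactorial_le_two_pow_mul_factorial_mul_stirlingFirst (j m : ℕ) :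
    (j + m).descFactorial (2 * m) ≤ 2 ^ m * m ! * (j + m).stirlingFirst j := by
  induction j generalizing m with
  | zero => cases m <;> simp
  | succ j ihj =>
    induction m with
    | zero => simp [Nat.stirlingFirst_self]
    | succ m ihm =>
      calc (j + 1 + m + 1).descFactorial (2 * m + 1 + 1)
          ≤ (2 * m + 1 + 1) * (j + 1 + m).descFactorial (2 * m + 1) +
            (j + 1 + m).descFactorial (2 * m + 1 + 1) := succ_descFactorial_succ_le _ _
        _ ≤ 2 * (m + 1) * (j + 1 + m) * (j + 1 + m).descFactorial (2 * m) +
            (j + (m + 1)).descFactorial (2 * (m + 1)) := by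
            rw [Nat.descFactorial_succ _ (2 * m), ← mul_assoc, show j + (m + 1) = j + 1 + m by ring]
            gcongr
            · lia
            · exact Nat.sub_le _ _
            · lia
        _ ≤ 2 * (m + 1) * (j + 1 + m) * (2 ^ m * m ! * (j + 1 + m).stirlingFirst (j + 1)) +
            2 ^ (m + 1) * (m + 1)! * (j + (m + 1)).stirlingFirst j := by
            gcongr
            exact ihj (m + 1)
        _ = 2 ^ (m + 1) * (m + 1)! * (j + 1 + (m + 1)).stirlingFirst (j + 1) :=
            (two_pow_mul_factorial_mul_stirlingFirst_succ j m).symm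

lemma tendsto_stirlingFirst_sub_div_pow (m : ℕ) :
    Tendsto (fun n : ℕ => (n.stirlingFirst (n - m) : ℝ) / (n : ℝ) ^ (2 * m)) atTop
      (𝓝 (1 / (2 ^ m * m !))) := by
  have hlower := (tendsto_descFactorial_div_pow one_ne_zero 0 (2 * m)).div_const (2 ^ m * m ! : ℝ)
  simp only [one_mul, add_zero, Nat.cast_one, one_pow] at hlower
  refine tendsto_of_tendsto_of_tendsto_of_le_of_le' hlower tendsto_const_nhds ?_ ?_
  all_goals filter_upwards [eventually_ge_atTop m, eventually_gt_atTop 0] with n hmn hn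
  · have hle := descFactorial_le_two_pow_mul_factorial_mul_stirlingFirst (n - m) m
    rw [Nat.sub_add_cancel hmn] at hle
    rw [div_right_comm]
    gcongr
    rw [div_le_iff₀' (by positivity)]
    exact_mod_cast hle
  · have hle := two_pow_mul_factorial_mul_stirlingFirst_le_pow (n - m) m
    rw [Nat.sub_add_cancel hmn] at hle
    rw [div_le_div_iff₀ (by positivity) (by positivity), one_mul, mul_comm]
    exact_mod_cast hle

end StirlingNumbers

section FactorialGrowth

lemma tendsto_sum_range_mul_of_dominated {𝕜 : Type*} [NormedField 𝕜] [CompleteSpace 𝕜]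
    {w : ℕ → ℕ → 𝕜} {ω u : ℕ → 𝕜} {bound : ℕ → ℝ} {L : 𝕜} (hbound : Summable bound)
    (hw : ∀ n m, m ≤ n → ‖w n m‖ ≤ bound m)
    (hω : ∀ m, Tendsto (fun n => w n m) atTop (𝓝 (ω m))) (hu : Tendsto u atTop (𝓝 L)) :
    Tendsto (fun n => ∑ m ∈ range (n + 1), w n m * u (n - m)) atTop (𝓝 ((∑' m, ω m) * L)) := by
  obtain ⟨U, hU⟩ : ∃ U, ∀ n, ‖u n‖ ≤ U := by
    obtain ⟨U, hU⟩ := (Metric.isBounded_range_of_tendsto u hu).exists_norm_le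
    exact ⟨U, fun n => hU _ ⟨n, rfl⟩⟩
  have hU0 : 0 ≤ U := (norm_nonneg _).trans (hU 0)
  have hbound0 (m : ℕ) : 0 ≤ bound m := (norm_nonneg _).trans (hw m m le_rfl)
  have hlim : Tendsto (fun n => ∑' m, if m ∈ range (n + 1) then w n m * u (n - m) else 0) atTop
      (𝓝 (∑' m, ω m * L)) := by
    refine tendsto_tsum_of_dominated_convergence (hbound.mul_right U) (fun m => ?_)
      (Eventually.of_forall fun n m => ?_)
    · refine ((hω m).mul (hu.comp (tendsto_sub_atTop_nat m))).congr' ?_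
      filter_upwards [eventually_ge_atTop m] with n hn
      rw [if_pos (mem_range_succ_iff.2 hn), Function.comp_apply]
    · split_ifs with hm
      · rw [norm_mul]
        exact mul_le_mul (hw n m (mem_range_succ_iff.1 hm)) (hU _) (norm_nonneg _) (hbound0 m)
      · simpa using mul_nonneg (hbound0 m) hU0
  rw [tsum_mul_right] at hlim
  refine hlim.congr fun n => ?_
  rw [tsum_eq_sum fun m hm => if_neg hm]
  exact sum_congr rfl fun m hm => if_pos hm

/-- The growth scale `(2n+ν)! Rⁿ` against which `C_n`, `bⁿ D_n` and `n! bⁿ ξ(n)` are compared. -/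
noncomputable def factorialGrowth (R : ℝ) (ν n : ℕ) : ℝ :=
  (2 * n + ν)! * R ^ n

lemma factorialGrowth_ne_zero {R : ℝ} (hR : R ≠ 0) (ν n : ℕ) : factorialGrowth R ν n ≠ 0 :=
  mul_ne_zero (Nat.cast_ne_zero.2 (Nat.factorial_ne_zero _)) (pow_ne_zero n hR)

lemma factorialGrowth_eq_sub_mul (R : ℝ) (ν : ℕ) {n m : ℕ} (h : m ≤ n) :
    factorialGrowth R ν n =
      factorialGrowth R ν (n - m) * (R ^ m * (2 * n + ν).descFactorial (2 * m)) := by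
  have hfac := Nat.factorial_mul_descFactorial (n := 2 * n + ν) (k := 2 * m) (by lia)
  rw [show 2 * n + ν - 2 * m = 2 * (n - m) + ν by lia] at hfac
  rw [factorialGrowth, factorialGrowth, ← hfac, ← pow_sub_mul_pow R h]
  push_cast
  ring

variable {ν : ℕ} {R : ℝ} {W : ℕ → ℕ → ℝ}

lemma norm_mul_pow_div_descFactorial_le (y : ℝ) {n m : ℕ} (h : m ≤ n)
    (hW : m ! * |W n m| ≤ (2 * n + ν).descFactorial (2 * m)) :
    ‖W n m * y ^ m / (2 * n + ν).descFactorial (2 * m)‖ ≤ |y| ^ m / m ! := by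
  have hpos : (0 : ℝ) < (2 * n + ν).descFactorial (2 * m) :=
    Nat.cast_pos.2 (descFactorial_two_mul_add_pos ν h)
  rw [Real.norm_eq_abs, abs_div, abs_mul, abs_pow, Nat.abs_cast,
    div_le_div_iff₀ hpos (by positivity)]
  calc |W n m| * |y| ^ m * m ! = |y| ^ m * (m ! * |W n m|) := by ring
    _ ≤ |y| ^ m * (2 * n + ν).descFactorial (2 * m) := by gcongr

lemma tendsto_mul_pow_div_descFactorial (ν : ℕ) (y : ℝ) {m : ℕ} {w : ℕ → ℝ} {ω : ℝ}
    (hω : Tendsto (fun n : ℕ => w n / (n : ℝ) ^ (2 * m)) atTop (𝓝 ω)) :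
    Tendsto (fun n : ℕ => w n * y ^ m / (2 * n + ν).descFactorial (2 * m)) atTop
      (𝓝 (ω * (y / 4) ^ m)) := by
  have hlim := (hω.div (tendsto_descFactorial_div_pow two_ne_zero ν (2 * m))
    (by positivity)).mul_const (y ^ m)
  have hval : ω / ((2 : ℕ) : ℝ) ^ (2 * m) * y ^ m = ω * (y / 4) ^ m := by
    rw [pow_mul, div_pow]
    norm_num
    ring
  rw [hval] at hlim
  refine hlim.congr' ?_
  filter_upwards [eventually_ne_atTop 0] with n hn
  rw [Pi.div_apply, div_div_div_cancel_right₀ (by positivity), div_mul_eq_mul_div]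

-- Passing from `n` to `n - m` divides the scale by about `(4 R n²) ^ m`, so a weight of order
-- `n ^ (2 * m)` contributes exactly its leading coefficient.
lemma tendsto_sum_mul_pow_mul_div_factorialGrowth {c ω : ℕ → ℝ} {L : ℝ} (hR : R ≠ 0) (y : ℝ)
    (hW : ∀ n m, m ≤ n → m ! * |W n m| ≤ (2 * n + ν).descFactorial (2 * m))
    (hω : ∀ m, Tendsto (fun n : ℕ => W n m / (n : ℝ) ^ (2 * m)) atTop (𝓝 (ω m)))
    (hc : Tendsto (fun n => c n / factorialGrowth R ν n) atTop (𝓝 L)) :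
    Tendsto (fun n => (∑ m ∈ range (n + 1), W n m * y ^ m * c (n - m)) / factorialGrowth R ν n)
      atTop (𝓝 ((∑' m, ω m * (y / (4 * R)) ^ m) * L)) := by
  have hlim := tendsto_sum_range_mul_of_dominated
    (Real.summable_pow_div_factorial |y / R|)
    (fun n m h => norm_mul_pow_div_descFactorial_le (y / R) h (hW n m h))
    (fun m => tendsto_mul_pow_div_descFactorial ν (y / R) (hω m)) hc
  simp only [div_div, mul_comm R 4] at hlim
  refine hlim.congr fun n => ?_
  rw [sum_div]
  refine sum_congr rfl fun m hm => ?_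
  have hmn : m ≤ n := mem_range_succ_iff.1 hm
  have hscale := factorialGrowth_ne_zero hR ν (n - m)
  have hdesc := (descFactorial_two_mul_add_pos ν hmn).ne'
  rw [factorialGrowth_eq_sub_mul R ν hmn, div_pow]
  field_simp

end FactorialGrowth

section CentralBinomial

lemma tendsto_factorial_two_mul_mul_sqrt_div :
    Tendsto (fun n : ℕ => (2 * n)! * √(π * n) / (4 ^ n * (n ! : ℝ) ^ 2)) atTop (𝓝 1) := by
  have hatTop : Tendsto (fun n : ℕ => 2 * n) atTop atTop :=
    tendsto_id.const_mul_atTop' two_pos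
  have hstirling := Stirling.tendsto_stirlingSeq_sqrt_pi
  have hlim := ((hstirling.comp hatTop).div (hstirling.pow 2) (by positivity)).mul_const √π
  rw [show √π / √π ^ 2 * √π = 1 by field_simp] at hlim
  refine hlim.congr' ?_
  filter_upwards [eventually_gt_atTop 0] with n hn
  have hsqrt_four : √(2 * (2 * n)) = 2 * √n := by
    rw [← mul_assoc, Real.sqrt_mul (by norm_num)]
    norm_num
  have hsq_two : √(2 * n) ^ 2 = 2 * n := Real.sq_sqrt (by positivity)
  have hsq : √(n : ℝ) ^ 2 = n := Real.sq_sqrt (by positivity)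
  simp only [Function.comp, Stirling.stirlingSeq, Pi.div_apply, Nat.cast_mul, Nat.cast_ofNat,
    Real.sqrt_mul Real.pi_pos.le, hsqrt_four, div_pow, mul_pow, hsq_two, pow_mul]
  have hexp : Real.exp 1 ≠ 0 := Real.exp_ne_zero 1
  generalize Real.exp 1 = e at hexp ⊢
  field_simp
  rw [hsq]
  norm_num
  ring

lemma tendsto_factorial_two_mul_add_mul_sqrt_pi_div (ν : ℕ) :
    Tendsto (fun n : ℕ => (2 * n + ν)! * √π /
      ((n ! : ℝ) ^ 2 * 2 ^ (2 * n + ν) * (n : ℝ) ^ ((ν : ℝ) - 1 / 2))) atTop (𝓝 1) := by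
  have hlim := tendsto_factorial_two_mul_mul_sqrt_div.mul
    ((tendsto_descFactorial_div_pow two_ne_zero ν ν).div_const ((2 : ℕ) ^ ν : ℝ))
  rw [div_self (by positivity), mul_one] at hlim
  refine hlim.congr' ?_
  filter_upwards [eventually_gt_atTop 0] with n hn
  have hn' : (0 : ℝ) < n := Nat.cast_pos.2 hn
  have hrpow : (n : ℝ) ^ ((ν : ℝ) - 1 / 2) = (n : ℝ) ^ ν / √n := by
    rw [Real.rpow_sub hn', Real.rpow_natCast, Real.sqrt_eq_rpow]
  have hfac : ((2 * n + ν)! : ℝ) = (2 * n)! * (2 * n + ν).descFactorial ν := by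
    rw [← Nat.factorial_mul_descFactorial (Nat.le_add_left ν (2 * n)), Nat.add_sub_cancel]
    push_cast
    ring
  rw [hrpow, hfac, Real.sqrt_mul Real.pi_pos.le, pow_add, pow_mul]
  norm_num
  field_simp

end CentralBinomial

section DirichletSeries

lemma tendsto_pow_mul_tsum_div_pow {G : ℕ → ℝ} (hG : ∃ C, ∀ j, |G j| ≤ C) {k : ℕ} (hk : k ≠ 0)
    (hmin : ∀ j, 1 ≤ j → j < k → G j = 0) :
    Tendsto (fun s : ℕ => (k : ℝ) ^ s * ∑' j : ℕ, G j / (j : ℝ) ^ s) atTop (𝓝 (G k)) := by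
  obtain ⟨C, hC⟩ := hG
  obtain ⟨k, rfl⟩ := Nat.exists_eq_succ_of_ne_zero hk
  set g : ℕ → ℂ := fun j => if j = 0 then 0 else (G j : ℂ) with hg
  have hzero : ∀ j ≤ k, g j = 0 := by
    intro j hj
    rcases eq_or_ne j 0 with rfl | hj0
    · exact if_pos rfl
    · simp [hg, hmin j (Nat.one_le_iff_ne_zero.2 hj0) (Nat.lt_succ_of_le hj)]
  have habscissa : LSeries.abscissaOfAbsConv g < ⊤ := by
    refine (LSeries.abscissaOfAbsConv_le_of_le_const ⟨C, fun j hj => ?_⟩).trans_lt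
      (EReal.coe_lt_top 1)
    simpa [hg, hj] using hC j
  have hlim := (LSeries.tendsto_cpow_mul_atTop hzero habscissa).comp tendsto_natCast_atTop_atTop
  rw [show g (k + 1) = (G (k + 1) : ℂ) from if_neg k.succ_ne_zero] at hlim
  rw [← tendsto_ofReal_iff]
  refine hlim.congr' ?_
  filter_upwards [eventually_ne_atTop 0] with s hs
  simp only [Function.comp, LSeries, LSeries.term_def, Complex.ofReal_natCast,
    Complex.cpow_natCast]
  push_cast
  congr 1
  refine tsum_congr fun j => ?_
  rcases eq_or_ne j 0 with rfl | hj
  · simp [hs]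
  · simp [hg, hj]

end DirichletSeries

section FourierExpansion

lemma sum_Icc_one_eq_sum_range {α : Type*} [AddCommMonoid α] {g : ℕ → α} {M : ℕ} (h : g M = g 0) :
    ∑ m ∈ Icc 1 M, g m = ∑ m ∈ range M, g m := by
  rcases M with _ | M
  · rfl
  · rw [sum_range_succ', ← h, ← sum_range_succ (fun m => g (m + 1)), ← Ico_succ_right_eq_Icc,
      sum_Ico_eq_sum_range]
    exact sum_congr rfl fun m _ => by rw [add_comm]

lemma ratCast_eval_bernoulli (n : ℕ) (q : ℚ) :
    (((Polynomial.bernoulli n).eval q : ℚ) : ℝ) = bernoulliFun n q := by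
  rw [bernoulliFun, Polynomial.eval_map]
  exact (Polynomial.eval₂_at_apply (algebraMap ℚ ℝ) q).symm

variable {M ν : ℕ} {f : ℤ → ℝ}

-- The phase `ν * (π / 2)` treats the sine and cosine cases uniformly.
lemma hasSum_sin_add_phase_div_pow (hν : ν = 0 ∨ ν = 1) {n : ℕ} (hn : n ≠ 0) {x : ℝ}
    (hx : x ∈ Set.Icc 0 1) :
    HasSum (fun k : ℕ => Real.sin (2 * π * k * x + ν * (π / 2)) / (k : ℝ) ^ (2 * n + ν + 1))
      ((-1) ^ (n + 1 + ν) * (2 * π) ^ (2 * n + ν + 1) / (2 * (2 * n + ν + 1)!) *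
        bernoulliFun (2 * n + ν + 1) x) := by
  rcases hν with rfl | rfl
  · convert hasSum_one_div_nat_pow_mul_sin hn hx using 1
    · ext k
      simp [div_eq_inv_mul]
    · simp [bernoulliFun, div_div]
  · convert hasSum_one_div_nat_pow_mul_cos (k := n + 1) n.succ_ne_zero hx using 1
    · ext k
      rw [Nat.cast_one, one_mul, Real.sin_add_pi_div_two, mul_add_one, one_div_mul_eq_div]
    · simp [bernoulliFun, div_div, mul_add]

lemma Gf_eq_sum_sin_add_phase (hν : ν = 0 ∨ ν = 1) (k : ℕ) :
    Gf M f ν k =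
      2 / √M * ∑ m ∈ range M, f m * Real.sin (2 * π * k * (m / M) + ν * (π / 2)) := by
  have harg (m : ℕ) : 2 * π * m * k / M = 2 * π * k * (m / M) := by ring
  rcases hν with rfl | rfl <;> simp [Gf, harg, Real.sin_add_pi_div_two]

lemma abs_Gf_le (hν : ν = 0 ∨ ν = 1) (k : ℕ) :
    |Gf M f ν k| ≤ 2 / √M * ∑ m ∈ range M, |f m| := by
  rw [Gf_eq_sum_sin_add_phase hν, abs_mul, abs_of_nonneg (by positivity)]
  gcongr
  refine (abs_sum_le_sum_abs _ _).trans (sum_le_sum fun m _ => ?_)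
  rw [abs_mul]
  exact mul_le_of_le_one_right (abs_nonneg _) (Real.abs_sin_le_one _)

lemma Gf_eq_sum_Icc (hM : M ≠ 0) (hf : ∀ n : ℤ, f (n + M) = f n) (hν : ν = 0 ∨ ν = 1) (k : ℕ) :
    Gf M f ν k =
      2 / √M * ∑ m ∈ Icc 1 M, f m * Real.sin (2 * π * k * (m / M) + ν * (π / 2)) := by
  rw [Gf_eq_sum_sin_add_phase hν, sum_Icc_one_eq_sum_range]
  have hfM : f M = f 0 := by simpa using hf 0
  have harg : 2 * π * k * ((M : ℝ) / M) + ν * (π / 2) = ν * (π / 2) + k * (2 * π) := by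
    field_simp
    ring
  rw [harg, Real.sin_add_nat_mul_two_pi]
  simp [hfM]

lemma hasSum_Gf_div_pow (hM : M ≠ 0) (hf : ∀ n : ℤ, f (n + M) = f n) (hν : ν = 0 ∨ ν = 1)
    {n : ℕ} (hn : n ≠ 0) :
    HasSum (fun k : ℕ => Gf M f ν k / (k : ℝ) ^ (2 * n + ν + 1))
      (Cf M f ν n * ((-1) ^ ν * (2 * π) ^ (2 * n + ν + 1) /
        ((M : ℝ) ^ (2 * n + ν) * (2 * n + ν)! * √M))) := by
  have hmem : ∀ m ∈ Icc 1 M, (m : ℝ) / M ∈ Set.Icc 0 1 := fun m hm =>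
    ⟨by positivity, div_le_one_of_le₀ (Nat.cast_le.2 (mem_Icc.1 hm).2) (by positivity)⟩
  have hsum := hasSum_sum fun m hm =>
    (hasSum_sin_add_phase_div_pow hν hn (hmem m hm)).mul_left (2 / √M * f m)
  convert! hsum using 1
  · funext k
    rw [Gf_eq_sum_Icc hM hf hν, mul_sum, sum_div]
    exact sum_congr rfl fun m _ => by ring
  · rw [Cf, mul_sum, sum_mul]
    refine sum_congr rfl fun m _ => ?_
    rw [ratCast_eval_bernoulli, Nat.factorial_succ]
    push_cast
    field_simp
    ring

/-- The constant `A` in `C_n ~ A (2n+ν)! (M/(2πk))^(2n)`, where `k = k_ν`. -/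
noncomputable def leadingCoeffCf (M : ℕ) (f : ℤ → ℝ) (ν k : ℕ) : ℝ :=
  (-1) ^ ν * (M / (2 * π * k)) ^ (ν + 1) * Gf M f ν k / √M

lemma leadingCoeffCf_ne_zero {k : ℕ} (hM : M ≠ 0) (hk : k ≠ 0) (hG : Gf M f ν k ≠ 0) :
    leadingCoeffCf M f ν k ≠ 0 := by
  rw [leadingCoeffCf]
  positivity

lemma tendsto_Cf_div_factorialGrowth (hM : M ≠ 0) (hf : ∀ n : ℤ, f (n + M) = f n)
    (hν : ν = 0 ∨ ν = 1) {k : ℕ} (hk : k ≠ 0) (hmin : ∀ j, 1 ≤ j → j < k → Gf M f ν j = 0) :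
    Tendsto (fun n => Cf M f ν n / factorialGrowth ((M / (2 * π * k)) ^ 2) ν n) atTop
      (𝓝 (leadingCoeffCf M f ν k)) := by
  have hatTop : Tendsto (fun n : ℕ => 2 * n + ν + 1) atTop atTop :=
    tendsto_atTop_mono (fun n => show n ≤ _ by lia) tendsto_id
  have hlim := ((tendsto_pow_mul_tsum_div_pow ⟨_, abs_Gf_le hν⟩ hk hmin).comp hatTop).const_mul
    ((-1) ^ ν * ((M : ℝ) / (2 * π * k)) ^ (ν + 1) / √M)
  rw [show (-1) ^ ν * ((M : ℝ) / (2 * π * k)) ^ (ν + 1) / √M * Gf M f ν k =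
    leadingCoeffCf M f ν k by rw [leadingCoeffCf]; ring] at hlim
  refine hlim.congr' ?_
  filter_upwards [eventually_ne_atTop 0] with n hn
  have hsq : √(M : ℝ) ^ 2 = M := Real.sq_sqrt (by positivity)
  have hsign : ((-1 : ℝ) ^ ν) ^ 2 = 1 := by rw [← pow_mul, mul_comm, pow_mul, neg_one_sq, one_pow]
  rw [Function.comp_apply, (hasSum_Gf_div_pow hM hf hν hn).tsum_eq, factorialGrowth]
  simp only [div_pow, mul_pow, pow_add, pow_mul]
  field_simp
  rw [hsq, hsign]
  ring

end FourierExpansion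

section Transforms

variable {M ν a b : ℕ} {f : ℤ → ℝ} {R L : ℝ}

lemma pow_mul_Df_eq_sum (hb : b ≠ 0) (n : ℕ) :
    b ^ n * Df M f ν a b n = ∑ m ∈ range (n + 1), n.choose m * (a : ℝ) ^ m * Cf M f ν (n - m) := by
  rw [Df, mul_inv_cancel_left₀ (by positivity), ← sum_flip]
  refine sum_congr rfl fun m hm => ?_
  have hmn : m ≤ n := mem_range_succ_iff.1 hm
  rw [Nat.choose_symm hmn, Nat.sub_sub_self hmn]

lemma factorial_mul_xif_eq_sum (n : ℕ) :
    n ! * xif M f ν a b n =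
      ∑ m ∈ range (n + 1), n.stirlingFirst (n - m) * Df M f ν a b (n - m) := by
  cases n with
  | zero => simp [xif]
  | succ n =>
    rw [xif, sum_range_succ _ (n + 1), Nat.sub_self, Nat.stirlingFirst_succ_zero]
    simp only [stirling1_eq_stirlingFirst]
    rw [Nat.cast_zero, zero_mul, add_zero, ← mul_assoc, mul_one_div_cancel (by positivity), one_mul]

lemma factorial_mul_pow_mul_xif_eq_sum (n : ℕ) :
    n ! * b ^ n * xif M f ν a b n = ∑ m ∈ range (n + 1),
      n.stirlingFirst (n - m) * (b : ℝ) ^ m * (b ^ (n - m) * Df M f ν a b (n - m)) := by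
  rw [mul_right_comm, factorial_mul_xif_eq_sum, sum_mul]
  refine sum_congr rfl fun m hm => ?_
  rw [← pow_mul_pow_sub (b : ℝ) (mem_range_succ_iff.1 hm)]
  ring

lemma tendsto_pow_mul_Df_div_factorialGrowth (hb : b ≠ 0) (hR : R ≠ 0)
    (hC : Tendsto (fun n => Cf M f ν n / factorialGrowth R ν n) atTop (𝓝 L)) :
    Tendsto (fun n => b ^ n * Df M f ν a b n / factorialGrowth R ν n) atTop (𝓝 L) := by
  have hlim := tendsto_sum_mul_pow_mul_div_factorialGrowth hR a
    (W := fun n m => n.choose m) (fun n m h => by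
      rw [Nat.abs_cast]
      exact_mod_cast factorial_mul_choose_le_descFactorial ν h)
    tendsto_choose_div_pow_two_mul hC
  have htsum : ∑' m, (if m = 0 then 1 else 0) * (a / (4 * R)) ^ m = 1 := by
    rw [tsum_eq_single 0 fun m hm => by rw [if_neg hm, zero_mul]]
    simp
  rw [htsum, one_mul] at hlim
  exact hlim.congr fun n => by rw [pow_mul_Df_eq_sum hb]

lemma tendsto_factorial_mul_pow_mul_xif_div_factorialGrowth (hb : b ≠ 0) (hR : R ≠ 0)
    (hC : Tendsto (fun n => Cf M f ν n / factorialGrowth R ν n) atTop (𝓝 L)) :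
    Tendsto (fun n => n ! * b ^ n * xif M f ν a b n / factorialGrowth R ν n) atTop
      (𝓝 (Real.exp (b / (8 * R)) * L)) := by
  have hlim := tendsto_sum_mul_pow_mul_div_factorialGrowth hR b
    (W := fun n m => n.stirlingFirst (n - m)) (fun n m h => by
      rw [Nat.abs_cast]
      exact_mod_cast factorial_mul_stirlingFirst_sub_le_descFactorial ν h)
    tendsto_stirlingFirst_sub_div_pow (tendsto_pow_mul_Df_div_factorialGrowth (a := a) hb hR hC)
  have htsum : ∑' m : ℕ, 1 / (2 ^ m * m !) * (b / (4 * R)) ^ m = Real.exp (b / (8 * R)) := by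
    rw [Real.exp_eq_exp_ℝ, NormedSpace.exp_eq_tsum_div]
    refine tsum_congr fun m => ?_
    rw [show (b : ℝ) / (8 * R) = b / (4 * R) / 2 by ring, div_pow _ 2]
    ring
  rw [htsum] at hlim
  exact hlim.congr fun n => by rw [factorial_mul_pow_mul_xif_eq_sum]

end Transforms

/-- main theorem, asymptotic part.
`ξ_f(n) ~ (−1)^ν (M/(2πk_ν))^(2n+ν+1) G_f^{(ν)}(k_ν) 2^(2n+ν) n! n^(ν−1/2)
          e^(b k_ν² π²/(2M²)) / (b^n √(πM))` as `n → ∞`. -/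
theorem xif_asymptotic (M : ℕ) (hM : 2 ≤ M) (f : ℤ → ℝ)
    (hf : ∀ n : ℤ, f (n + M) = f n) (ν : ℕ) (hν : ν = 0 ∨ ν = 1)
    (a b : ℕ) (hb : 1 ≤ b)
    (kν : ℕ) (hkν : 1 ≤ kν) (hG : Gf M f ν kν ≠ 0)
    (hmin : ∀ j : ℕ, 1 ≤ j → j < kν → Gf M f ν j = 0) :
    Filter.Tendsto
      (fun n : ℕ => xif M f ν a b n /
        ((-1) ^ ν * ((M : ℝ) / (2 * Real.pi * kν)) ^ (2 * n + ν + 1) * Gf M f ν kν *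
          2 ^ (2 * n + ν) * (n.factorial : ℝ) * (n : ℝ) ^ ((ν : ℝ) - 1 / 2) *
          Real.exp ((b : ℝ) * (kν : ℝ) ^ 2 * Real.pi ^ 2 / (2 * (M : ℝ) ^ 2)) /
          ((b : ℝ) ^ n * Real.sqrt (Real.pi * M))))
      Filter.atTop (nhds 1) := by
  have hM0 : M ≠ 0 := by lia
  have hk0 : kν ≠ 0 := by lia
  have hb0 : b ≠ 0 := by lia
  have hratio : (M : ℝ) / (2 * π * kν) ≠ 0 := by positivity
  have hA : leadingCoeffCf M f ν kν ≠ 0 := leadingCoeffCf_ne_zero hM0 hk0 hG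
  have hxif := tendsto_factorial_mul_pow_mul_xif_div_factorialGrowth (a := a) hb0
    (pow_ne_zero 2 hratio) (tendsto_Cf_div_factorialGrowth hM0 hf hν hk0 hmin)
  have hexp : (b : ℝ) / (8 * (M / (2 * π * kν)) ^ 2) = b * kν ^ 2 * π ^ 2 / (2 * M ^ 2) := by
    field_simp
    ring
  rw [hexp] at hxif
  set E := Real.exp ((b : ℝ) * kν ^ 2 * π ^ 2 / (2 * M ^ 2))
  have hlim := (hxif.div_const (E * leadingCoeffCf M f ν kν)).mul
    (tendsto_factorial_two_mul_add_mul_sqrt_pi_div ν)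
  rw [div_self (by positivity), one_mul] at hlim
  refine hlim.congr' ?_
  filter_upwards [eventually_ne_atTop 0] with n hn
  rw [leadingCoeffCf, factorialGrowth, Real.sqrt_mul Real.pi_pos.le, ← pow_mul, add_assoc (2 * n),
    pow_add _ (2 * n) (ν + 1)]
  field_simp
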